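/- There is a constant n₀ such that, for every n ≥ n₀ and every k ≤ n, there exists a bipartite graph H with maximum degree Δ(H) ≤ 100 and bipartition classes X and Y ∪ Z, with |X| = 3n, |Y| = 2n and |Z| = n + k, such that the following holds: for every Z' ⊆ Z with |Z'| = n, there exists a perfect matching in H between X and Y ∪ Z'. -/

import Mathlib

open SimpleGraph

/-!
A perfect matching between two classes of the same size exists as soon as Hall's condition holds
for the sets of at most about half of either class: a larger violating set `A` gives a small
violating set in the complement of `N(A)`. Such Hall conditions do not refer to `Z'`, because they
pass to all subsets of `Y ∪ Z` on the one side, and follow from the edges into `Y` alone on the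
other side. So `H` can be the union of two expanders, one from `X` to `Y` and one from `Y ∪ Z` to
`X`.

The expanders come from the configuration model. A given set of `s d` ports lands, under a random
permutation, in the ports of a given set of `s` vertices out of `r` with probability at most
`(s / r) ^ (s d)`, and for constant `d` this beats the number of pairs of sets of size `s`.
-/

open Finset

section Counting

theorem descFactorial_mul_pow_le_descFactorial_mul_pow {b N : ℕ} (h : b ≤ N) (a : ℕ) :
    b.descFactorial a * N ^ a ≤ N.descFactorial a * b ^ a := by
  rw [Nat.descFactorial_eq_prod_range, Nat.descFactorial_eq_prod_range,
    pow_eq_prod_const, pow_eq_prod_const, ← prod_mul_distrib, ← prod_mul_distrib]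
  refine prod_le_prod' fun i _ => ?_
  rw [Nat.sub_mul, Nat.sub_mul, mul_comm b N]
  exact Nat.sub_le_sub_left (Nat.mul_le_mul_left i h) _

theorem choose_le_exp_one_mul_div_pow (m s : ℕ) :
    (m.choose s : ℝ) ≤ (Real.exp 1 * m / s) ^ s := by
  rcases Nat.eq_zero_or_pos s with rfl | hs
  · simp
  have hpow : (s : ℝ) ^ s ≤ Real.exp 1 ^ s * s.factorial := by
    rw [← div_le_iff₀ (by positivity), ← Real.exp_nat_mul, mul_one]
    exact Real.pow_div_factorial_le_exp (s : ℝ) (by positivity) s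
  calc (m.choose s : ℝ) ≤ (m : ℝ) ^ s / s.factorial := Nat.choose_le_pow_div s m
    _ ≤ (Real.exp 1 * m / s) ^ s := by
      rw [div_pow, mul_pow, div_le_div_iff₀ (by positivity) (by positivity), mul_right_comm,
        mul_comm]
      gcongr

theorem choose_mul_choose_mul_pow_le (l : ℕ) {r s d : ℕ} (hs : 0 < s) (hr : 0 < r) (hd : 2 ≤ d) :
    l.choose s * r.choose s * ((s : ℝ) / r) ^ (s * d) ≤
      (Real.exp 1 ^ 2 * (l / r) * (s / r) ^ (d - 2)) ^ s := by
  calc l.choose s * r.choose s * ((s : ℝ) / r) ^ (s * d)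
      ≤ (Real.exp 1 * l / s) ^ s * (Real.exp 1 * r / s) ^ s * ((s : ℝ) / r) ^ (s * d) := by
        gcongr <;> exact choose_le_exp_one_mul_div_pow _ s
    _ = (Real.exp 1 * l / s * (Real.exp 1 * r / s) * ((s : ℝ) / r) ^ (d - 2 + 2)) ^ s := by
        rw [Nat.sub_add_cancel hd, mul_comm s d, pow_mul, ← mul_pow, ← mul_pow]
    _ = (Real.exp 1 ^ 2 * (l / r) * (s / r) ^ (d - 2)) ^ s := by
        rw [pow_add]
        field_simp

theorem sum_range_half_pow_succ_lt_one (m : ℕ) :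
    ∑ i ∈ range m, (1 / 2 : ℝ) ^ (i + 1) < 1 := by
  have hpos : (0 : ℝ) < (1 / 2) ^ m := by positivity
  simp only [pow_succ, ← sum_mul]
  rw [geom_sum_eq (by norm_num)]
  ring_nf at hpos ⊢
  linarith

open scoped Pointwise in
theorem card_smul_subset_mul_choose {G α : Type*} [Group G] [Fintype G] [Fintype α]
    [DecidableEq α] [MulAction G α] (S T : Finset α)
    [MulAction.IsPretransitive G (Set.powersetCard α #S)] :
    #{g : G | g • S ⊆ T} * (Fintype.card α).choose #S = Fintype.card G * (#T).choose #S := by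
  have card_eq : ∀ S' ∈ powersetCard #S (univ : Finset α),
      #{g : G | g • S' ⊆ T} = #{g : G | g • S ⊆ T} := by
    intro S' hS'
    obtain ⟨h, hh⟩ := MulAction.exists_smul_eq G (⟨S, rfl⟩ : Set.powersetCard α #S)
      ⟨S', (mem_powersetCard.1 hS').2⟩
    obtain rfl : h • S = S' := congrArg Subtype.val hh
    exact card_equiv (Equiv.mulRight h) fun g => by simp [mul_smul]
  have card_below : ∀ g : G,
      #{S' ∈ powersetCard #S (univ : Finset α) | g • S' ⊆ T} = (#T).choose #S := by
    intro g
    have : {S' ∈ powersetCard #S (univ : Finset α) | g • S' ⊆ T} = powersetCard #S (g⁻¹ • T) := by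
      ext S'
      simp [mem_powersetCard, smul_finset_subset_iff, and_comm]
    rw [this, card_powersetCard, card_smul_finset]
  have key := sum_card_bipartiteAbove_eq_sum_card_bipartiteBelow
    (s := powersetCard #S (univ : Finset α)) (t := (univ : Finset G)) fun S' g => g • S' ⊆ T
  simp only [bipartiteAbove, bipartiteBelow] at key
  rw [sum_congr rfl card_eq, sum_congr rfl fun g _ => card_below g] at key
  simpa [mul_comm] using key

open scoped Pointwise in
theorem card_smul_subset_le {G α : Type*} [Group G] [Fintype G] [Fintype α] [DecidableEq α]
    [MulAction G α] (S T : Finset α) [MulAction.IsPretransitive G (Set.powersetCard α #S)] :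
    (#{g : G | g • S ⊆ T} : ℝ) ≤ Fintype.card G * ((#T : ℝ) / Fintype.card α) ^ #S := by
  rcases S.eq_empty_or_nonempty with rfl | ⟨x, -⟩
  · simp
  have hα : 0 < Fintype.card α := Fintype.card_pos_iff.2 ⟨x⟩
  have hdesc : #{g : G | g • S ⊆ T} * (Fintype.card α).descFactorial #S =
      Fintype.card G * (#T).descFactorial #S := by
    simp only [Nat.descFactorial_eq_factorial_mul_choose, mul_left_comm _ (#S).factorial,
      card_smul_subset_mul_choose]
  have hpow : #{g : G | g • S ⊆ T} * Fintype.card α ^ #S ≤ Fintype.card G * #T ^ #S := by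
    refine le_of_mul_le_mul_left ?_ (Nat.descFactorial_pos.2 (card_le_univ S))
    calc (Fintype.card α).descFactorial #S * (#{g : G | g • S ⊆ T} * Fintype.card α ^ #S)
        = Fintype.card G * ((#T).descFactorial #S * Fintype.card α ^ #S) := by
          rw [← mul_assoc, mul_comm (Nat.descFactorial _ _), hdesc, mul_assoc]
      _ ≤ Fintype.card G * ((Fintype.card α).descFactorial #S * #T ^ #S) :=
          Nat.mul_le_mul_left _
            (descFactorial_mul_pow_le_descFactorial_mul_pow (card_le_univ T) _)
      _ = _ := mul_left_comm _ _ _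
  rw [div_pow, ← mul_div_assoc, le_div_iff₀ (by positivity)]
  exact_mod_cast hpow

end Counting

section Hall

variable {L L' R R' : Type*} [DecidableEq R]

/-- The bipartite graph in which the left vertex `x` has the set of neighbours `N x` satisfies
Hall's condition for all sets of at most `m` left vertices. -/
def HallUpTo (N : L → Finset R) (m : ℕ) : Prop :=
  ∀ A : Finset L, #A ≤ m → #A ≤ #(A.biUnion N)

/-- The neighbourhoods of the right vertices, in the bipartite graph in which the left vertex `x`
has the set of neighbours `N x`. -/
def transposeNeighbors [Fintype L] (N : L → Finset R) (y : R) : Finset L := {x | y ∈ N x}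

theorem mem_transposeNeighbors [Fintype L] {N : L → Finset R} {x : L} {y : R} :
    x ∈ transposeNeighbors N y ↔ y ∈ N x :=
  mem_filter_univ x

theorem HallUpTo.mono {N N' : L → Finset R} {m : ℕ} (hN : HallUpTo N m) (h : ∀ x, N x ⊆ N' x) :
    HallUpTo N' m :=
  fun A hA => (hN A hA).trans (card_le_card (biUnion_mono fun x _ => h x))

theorem HallUpTo.comp_embedding {N : L → Finset R} {m : ℕ} (hN : HallUpTo N m) (ι : L' ↪ L) :
    HallUpTo (N ∘ ι) m := by
  classical
  intro A hA
  have h := hN (A.map ι) (by rwa [card_map])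
  rwa [card_map, map_eq_image, image_biUnion] at h

theorem HallUpTo.map [DecidableEq R'] {N : L → Finset R} {m : ℕ} (hN : HallUpTo N m)
    (ι : R ↪ R') : HallUpTo (fun x => (N x).map ι) m := by
  intro A hA
  simpa only [map_eq_image, ← biUnion_image, card_image_of_injective _ ι.injective] using hN A hA

-- If `#A > m` and `#(N(A)) < #A`, then some `#L - #A + 1` right vertices outside `N(A)` have all
-- their neighbours in the complement of `A`, which has only `#L - #A` vertices.
theorem HallUpTo.exists_bijective [Fintype L] [Fintype R] [DecidableEq L] {N : L → Finset R}
    {m m' : ℕ} (hN : HallUpTo N m) (hN' : HallUpTo (transposeNeighbors N) m')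
    (hcard : Fintype.card L = Fintype.card R) (hm : Fintype.card L ≤ m + m') :
    ∃ f : L → R, f.Bijective ∧ ∀ x, f x ∈ N x := by
  have hall : ∀ A : Finset L, #A ≤ #(A.biUnion N) := by
    intro A
    by_contra! hlt
    have hA : m < #A := lt_of_not_ge fun h => hlt.not_ge (hN A h)
    have hAL := card_le_univ A
    obtain ⟨B, hBN, hB⟩ := exists_subset_card_eq
      (s := (A.biUnion N)ᶜ) (n := Fintype.card L - #A + 1) (by rw [card_compl]; omega)
    have hBA : B.biUnion (transposeNeighbors N) ⊆ Aᶜ := by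
      refine biUnion_subset.2 fun y hy x hx => mem_compl.2 fun hxA => ?_
      exact mem_compl.1 (hBN hy) (mem_biUnion.2 ⟨x, hxA, mem_transposeNeighbors.1 hx⟩)
    have := (hN' B (by omega)).trans (card_le_card hBA)
    rw [card_compl] at this
    omega
  obtain ⟨f, hf, hfN⟩ := (all_card_le_biUnion_card_iff_exists_injective N).1 hall
  exact ⟨f, (Fintype.bijective_iff_injective_and_card f).2 ⟨hf, hcard⟩, hfN⟩

end Hall

section Expander

variable {L R : Type*} [DecidableEq R] {d E : ℕ}

/-- The neighbourhoods of the left vertices in the bipartite graph of the configuration model: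
left vertices have `d` ports, right vertices have `E` ports, and `g` joins each left port to a
right port. -/
def portNeighbors (g : L × Fin d ↪ R × Fin E) (x : L) : Finset R := univ.image fun i => (g (x, i)).1

/-- Every port of a vertex of `A` is joined by `g` to a port of a vertex of `B`. -/
abbrev PortsMapInto (g : L × Fin d ↪ R × Fin E) (A : Finset L) (B : Finset R) : Prop :=
  (A ×ˢ univ).map g ⊆ B ×ˢ univ

theorem card_portNeighbors_le (g : L × Fin d ↪ R × Fin E) (x : L) : #(portNeighbors g x) ≤ d :=
  card_image_le.trans_eq (card_fin d)

theorem card_transposeNeighbors_portNeighbors_le [Fintype L] (g : L × Fin d ↪ R × Fin E) (y : R) :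
    #(transposeNeighbors (portNeighbors g) y) ≤ E := by
  classical
  calc #(transposeNeighbors (portNeighbors g) y)
      ≤ #(({p | (g p).1 = y} : Finset (L × Fin d)).image Prod.fst) :=
        card_le_card fun x hx => by simpa [mem_transposeNeighbors, portNeighbors] using hx
    _ ≤ #{p | (g p).1 = y} := card_image_le
    _ ≤ #(univ : Finset (Fin E)) := by
        refine card_le_card_of_injOn (fun p => (g p).2) (fun _ _ => mem_univ _) ?_
        intro p hp q hq hpq
        simp only [coe_filter, mem_univ, true_and, Set.mem_ofPred_eq] at hp hq
        exact g.injective (Prod.ext (hp.trans hq.symm) hpq)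
    _ = E := card_fin E

theorem hallUpTo_portNeighbors [Fintype R] {g : L × Fin d ↪ R × Fin E} {m : ℕ}
    (hm : m ≤ Fintype.card R)
    (hg : ∀ (A : Finset L) (B : Finset R), A.Nonempty → #A ≤ m → #B = #A →
      ¬ PortsMapInto g A B) :
    HallUpTo (portNeighbors g) m := by
  intro A hA
  by_contra! hlt
  obtain ⟨B, hNB, -, hB⟩ := exists_subsuperset_card_eq (subset_univ (A.biUnion (portNeighbors g)))
    hlt.le (by rw [card_univ]; omega)
  refine hg A B (card_pos.1 (by omega)) hA hB (map_subset_iff_subset_preimage.2 fun p hp => ?_)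
  have : (g p).1 ∈ portNeighbors g p.1 := mem_image_of_mem (fun i => (g (p.1, i)).1) (mem_univ p.2)
  simpa using hNB (mem_biUnion.2 ⟨p.1, (mem_product.1 hp).1, this⟩)

variable [Fintype R]

open scoped Pointwise in
theorem card_perm_portsMapInto_le (e : L × Fin d ↪ R × Fin E) (A : Finset L) (B : Finset R) :
    (#{τ : Equiv.Perm (R × Fin E) | PortsMapInto (e.trans τ.toEmbedding) A B} : ℝ) ≤
      Fintype.card (Equiv.Perm (R × Fin E)) * ((#B : ℝ) / Fintype.card R) ^ (#A * d) := by
  have := Set.powersetCard.isPretransitive (α := R × Fin E) (n := #((A ×ˢ univ).map e))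
  have himage : ∀ τ : Equiv.Perm (R × Fin E),
      PortsMapInto (e.trans τ.toEmbedding) A B ↔ τ • (A ×ˢ univ).map e ⊆ B ×ˢ univ := by
    intro τ
    rw [PortsMapInto, ← Finset.map_map, map_eq_image]
    rfl
  have hratio : ((#B * E : ℕ) : ℝ) / (Fintype.card R * E : ℕ) ≤ #B / Fintype.card R := by
    rw [Nat.cast_mul, Nat.cast_mul, mul_div_mul_comm]
    exact mul_le_of_le_one_right (by positivity) (div_self_le_one _)
  have h := card_smul_subset_le (G := Equiv.Perm (R × Fin E)) ((A ×ˢ univ).map e) (B ×ˢ univ)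
  rw [card_map, card_product, card_product, Fintype.card_prod, card_fin, card_fin,
    Fintype.card_fin] at h
  simp only [himage]
  exact h.trans (by gcongr)

variable [Fintype L]

theorem card_perm_exists_portsMapInto_le (e : L × Fin d ↪ R × Fin E) (s : ℕ) :
    (#{τ : Equiv.Perm (R × Fin E) | ∃ (A : Finset L) (B : Finset R), #A = s ∧ #B = s ∧
        PortsMapInto (e.trans τ.toEmbedding) A B} : ℝ) ≤
      Fintype.card (Equiv.Perm (R × Fin E)) *
        ((Fintype.card L).choose s * (Fintype.card R).choose s *
          ((s : ℝ) / Fintype.card R) ^ (s * d)) := by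
  set pairs := powersetCard s (univ : Finset L) ×ˢ powersetCard s (univ : Finset R)
  set bad : Finset L × Finset R → Finset (Equiv.Perm (R × Fin E)) := fun P =>
    {τ | PortsMapInto (e.trans τ.toEmbedding) P.1 P.2}
  have hbad : ∀ P ∈ pairs, (#(bad P) : ℝ) ≤
      Fintype.card (Equiv.Perm (R × Fin E)) * ((s : ℝ) / Fintype.card R) ^ (s * d) := by
    rintro ⟨A, B⟩ hP
    simp only [pairs, mem_product, mem_powersetCard, subset_univ, true_and] at hP
    simpa only [hP.1, hP.2] using card_perm_portsMapInto_le e A B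
  calc _ ≤ (#(pairs.biUnion bad) : ℝ) := by
        refine Nat.cast_le.2 (card_le_card fun τ hτ => ?_)
        obtain ⟨A, B, hA, hB, hAB⟩ := (mem_filter_univ τ).1 hτ
        exact mem_biUnion.2 ⟨(A, B), by simp [pairs, hA, hB], (mem_filter_univ τ).2 hAB⟩
    _ ≤ ∑ P ∈ pairs, (#(bad P) : ℝ) := mod_cast card_biUnion_le
    _ ≤ #pairs • _ := sum_le_card_nsmul _ _ _ hbad
    _ = _ := by
        rw [card_product, card_powersetCard, card_powersetCard, card_univ, card_univ,
          nsmul_eq_mul, Nat.cast_mul, mul_left_comm]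

omit [DecidableEq R] in
theorem exists_perm_forall_not_portsMapInto (e : L × Fin d ↪ R × Fin E) {m : ℕ} (hd : 2 ≤ d)
    (hm : m ≤ Fintype.card R)
    (hratio : Real.exp 1 ^ 2 * (Fintype.card L / Fintype.card R) *
      ((m : ℝ) / Fintype.card R) ^ (d - 2) ≤ 1 / 2) :
    ∃ τ : Equiv.Perm (R × Fin E), ∀ (A : Finset L) (B : Finset R),
      A.Nonempty → #A ≤ m → #B = #A → ¬ PortsMapInto (e.trans τ.toEmbedding) A B := by
  classical
  by_contra! hall
  set Ω := Equiv.Perm (R × Fin E)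
  set l := Fintype.card L
  set r := Fintype.card R
  set bad : ℕ → Finset Ω := fun s => {τ | ∃ (A : Finset L) (B : Finset R),
    #A = s ∧ #B = s ∧ PortsMapInto (e.trans τ.toEmbedding) A B}
  have hcover : (univ : Finset Ω) ⊆ (range m).biUnion fun i => bad (i + 1) := by
    intro τ _
    obtain ⟨A, B, hA, hAm, hBA, hAB⟩ := hall τ
    have := hA.card_pos
    exact mem_biUnion.2 ⟨#A - 1, mem_range.2 (by omega),
      (mem_filter_univ τ).2 ⟨A, B, by omega, by omega, hAB⟩⟩
  have hbad : ∀ i ∈ range m, (#(bad (i + 1)) : ℝ) ≤ Fintype.card Ω * (1 / 2) ^ (i + 1) := by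
    intro i hi
    have him : i + 1 ≤ m := mem_range.1 hi
    calc (#(bad (i + 1)) : ℝ)
        ≤ Fintype.card Ω * (l.choose (i + 1) * r.choose (i + 1) *
            (((i + 1 : ℕ) : ℝ) / r) ^ ((i + 1) * d)) := card_perm_exists_portsMapInto_le e (i + 1)
      _ ≤ Fintype.card Ω *
            (Real.exp 1 ^ 2 * (l / r) * (((i + 1 : ℕ) : ℝ) / r) ^ (d - 2)) ^ (i + 1) := by
          gcongr
          exact choose_mul_choose_mul_pow_le l i.succ_pos (by omega) hd
      _ ≤ Fintype.card Ω * (Real.exp 1 ^ 2 * (l / r) * ((m : ℝ) / r) ^ (d - 2)) ^ (i + 1) := by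
          gcongr
      _ ≤ Fintype.card Ω * (1 / 2) ^ (i + 1) := by gcongr
  have hlt : (Fintype.card Ω : ℝ) < Fintype.card Ω := by
    calc (Fintype.card Ω : ℝ) ≤ ∑ i ∈ range m, (#(bad (i + 1)) : ℝ) :=
          mod_cast (card_le_card hcover).trans card_biUnion_le
      _ ≤ ∑ i ∈ range m, Fintype.card Ω * (1 / 2 : ℝ) ^ (i + 1) := sum_le_sum hbad
      _ = Fintype.card Ω * ∑ i ∈ range m, (1 / 2 : ℝ) ^ (i + 1) := (mul_sum _ _ _).symm
      _ < Fintype.card Ω := mul_lt_of_lt_one_right (Nat.cast_pos.2 Fintype.card_pos)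
          (sum_range_half_pow_succ_lt_one m)
  exact hlt.false

theorem exists_hallUpTo {m : ℕ} (hd : 2 ≤ d)
    (hports : Fintype.card L * d ≤ Fintype.card R * E) (hm : m ≤ Fintype.card R)
    (hratio : Real.exp 1 ^ 2 * (Fintype.card L / Fintype.card R) *
      ((m : ℝ) / Fintype.card R) ^ (d - 2) ≤ 1 / 2) :
    ∃ N : L → Finset R, (∀ x, #(N x) ≤ d) ∧ (∀ y, #(transposeNeighbors N y) ≤ E) ∧
      HallUpTo N m := by
  obtain ⟨e⟩ : Nonempty (L × Fin d ↪ R × Fin E) :=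
    Function.Embedding.nonempty_of_card_le (by simpa using hports)
  obtain ⟨τ, hτ⟩ := exists_perm_forall_not_portsMapInto e hd hm hratio
  exact ⟨portNeighbors (e.trans τ.toEmbedding), card_portNeighbors_le _,
    card_transposeNeighbors_portNeighbors_le _, hallUpTo_portNeighbors hm hτ⟩

theorem exists_hallUpTo_of_thirteen_le {m : ℕ} (hd : 13 ≤ d)
    (hports : Fintype.card L * d ≤ Fintype.card R * E)
    (hLR : 2 * Fintype.card L ≤ 3 * Fintype.card R) (hm : 4 * m ≤ 3 * Fintype.card R) :
    ∃ N : L → Finset R, (∀ x, #(N x) ≤ d) ∧ (∀ y, #(transposeNeighbors N y) ≤ E) ∧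
      HallUpTo N m := by
  refine exists_hallUpTo (by omega) hports (by omega) ?_
  have hl : (Fintype.card L / Fintype.card R : ℝ) ≤ 3 / 2 := by
    refine div_le_of_le_mul₀ (by positivity) (by norm_num) ?_
    have : (2 * Fintype.card L : ℝ) ≤ 3 * Fintype.card R := mod_cast hLR
    linarith
  have hu : (m / Fintype.card R : ℝ) ≤ 3 / 4 := by
    refine div_le_of_le_mul₀ (by positivity) (by norm_num) ?_
    have : (4 * m : ℝ) ≤ 3 * Fintype.card R := mod_cast hm
    linarith
  calc Real.exp 1 ^ 2 * (Fintype.card L / Fintype.card R) * (m / Fintype.card R : ℝ) ^ (d - 2)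
      ≤ Real.exp 1 ^ 2 * (3 / 2) * (3 / 4) ^ (d - 2) := by gcongr
    _ ≤ 2.7183 ^ 2 * (3 / 2) * (3 / 4) ^ 11 := by
        have he : Real.exp 1 ≤ 2.7183 := by linarith [Real.exp_one_lt_d9]
        gcongr ?_ ^ 2 * _ * ?_
        exact pow_le_pow_of_le_one (by norm_num) (by norm_num) (by omega)
    _ ≤ 1 / 2 := by norm_num

end Expander

section Template

/-- The bipartite graph with classes `L` and `R` in which the left vertex `x` has the set of
neighbours `N x`. -/
def bipartiteGraph {L R : Type*} (N : L → Finset R) : SimpleGraph (L ⊕ R) where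
  Adj
    | .inl x, .inr y => y ∈ N x
    | .inr y, .inl x => y ∈ N x
    | _, _ => False
  symm := ⟨by rintro (x | y) (x' | y') h <;> exact h⟩
  loopless := ⟨by rintro (x | y) h <;> exact h⟩

theorem ncard_neighborSet_bipartiteGraph_inl {L R : Type*} (N : L → Finset R) (x : L) :
    ((bipartiteGraph N).neighborSet (.inl x)).ncard = #(N x) := by
  have : (bipartiteGraph N).neighborSet (.inl x) = Sum.inr '' (N x : Set R) := by
    ext (x' | y) <;> simp [bipartiteGraph]
  rw [this, Set.ncard_image_of_injective _ Sum.inr_injective, Set.ncard_coe_finset]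

theorem ncard_neighborSet_bipartiteGraph_inr {L R : Type*} [Fintype L] [DecidableEq R]
    (N : L → Finset R) (y : R) :
    ((bipartiteGraph N).neighborSet (.inr y)).ncard = #(transposeNeighbors N y) := by
  have : (bipartiteGraph N).neighborSet (.inr y) = Sum.inl '' (transposeNeighbors N y : Set L) := by
    ext (x | y') <;> simp [bipartiteGraph, mem_transposeNeighbors]
  rw [this, Set.ncard_image_of_injective _ Sum.inl_injective, Set.ncard_coe_finset]

variable {X Y Z : Type*} [DecidableEq X] [DecidableEq Y] [Fintype Y] [DecidableEq Z] [Fintype Z]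

/-- The neighbourhoods of the vertices in `X`, in the union of the graph from `X` to `Y` given by
`F` and the graph from `Y ∪ Z` to `X` given by `B`. -/
def unionNeighbors (F : X → Finset Y) (B : Y ⊕ Z → Finset X) (x : X) : Finset (Y ⊕ Z) :=
  (F x).map .inl ∪ transposeNeighbors B x

variable {F : X → Finset Y} {B : Y ⊕ Z → Finset X}

theorem card_unionNeighbors_le {a b : ℕ} (hF : ∀ x, #(F x) ≤ a)
    (hB : ∀ x, #(transposeNeighbors B x) ≤ b) (x : X) :
    #(unionNeighbors F B x) ≤ a + b :=
  (card_union_le _ _).trans (add_le_add ((card_map _).trans_le (hF x)) (hB x))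

theorem card_transposeNeighbors_unionNeighbors_le [Fintype X] {a b : ℕ}
    (hF : ∀ y, #(transposeNeighbors F y) ≤ a) (hB : ∀ w, #(B w) ≤ b) (w : Y ⊕ Z) :
    #(transposeNeighbors (unionNeighbors F B) w) ≤ a + b := by
  rcases w with y | z
  · have : transposeNeighbors (unionNeighbors F B) (.inl y) =
        transposeNeighbors F y ∪ B (.inl y) := by
      ext x
      simp [mem_transposeNeighbors, unionNeighbors]
    rw [this]
    exact (card_union_le _ _).trans (add_le_add (hF y) (hB _))
  · have : transposeNeighbors (unionNeighbors F B) (.inr z) = B (.inr z) := by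
      ext x
      simp [mem_transposeNeighbors, unionNeighbors]
    rw [this]
    exact (hB _).trans (Nat.le_add_left b a)

theorem exists_bijective_unionNeighbors [Fintype X] {m m' : ℕ} (hF : HallUpTo F m)
    (hB : HallUpTo B m') (hm : Fintype.card X ≤ m + m') (Z' : Finset Z)
    (hcard : Fintype.card X = Fintype.card Y + #Z') :
    ∃ f : X → Y ⊕ Z', f.Bijective ∧ ∀ x, Sum.map id (↑) (f x) ∈ unionNeighbors F B x := by
  set N : X → Finset (Y ⊕ Z') := fun x => {w | Sum.map id (↑) w ∈ unionNeighbors F B x}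
  have hN : HallUpTo N m := (hF.map .inl).mono fun x w hw => by
    obtain ⟨y, hy, rfl⟩ := mem_map.1 hw
    simp [N, unionNeighbors, hy]
  have hN' : HallUpTo (transposeNeighbors N) m' :=
    (hB.comp_embedding ((Function.Embedding.refl Y).sumMap (.subtype (· ∈ Z')))).mono
      fun w x hx => mem_transposeNeighbors.2 <| (mem_filter_univ _).2 <|
        mem_union_right _ (mem_transposeNeighbors.2 hx)
  obtain ⟨f, hf, hfN⟩ := hN.exists_bijective hN' (by simpa using hcard) hm
  exact ⟨f, hf, fun x => by simpa [N] using hfN x⟩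

end Template

theorem template_exists_general {X Y Z : Type*} [Fintype X] [Fintype Y] [Fintype Z] {n : ℕ}
    (hX : Fintype.card X = 3 * n) (hY : Fintype.card Y = 2 * n) (hZ : Fintype.card Z ≤ 2 * n) :
    ∃ H : SimpleGraph (X ⊕ (Y ⊕ Z)),
      (∀ a b : X, ¬ H.Adj (Sum.inl a) (Sum.inl b)) ∧
      (∀ a b : Y ⊕ Z, ¬ H.Adj (Sum.inr a) (Sum.inr b)) ∧
      (∀ v, (H.neighborSet v).ncard ≤ 33) ∧
      (∀ Z' : Finset Z, #Z' = n →
        ∃ f : X → Y ⊕ Z,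
          Function.Injective f ∧
          (∀ x, H.Adj (Sum.inl x) (Sum.inr (f x))) ∧
          (∀ x z, f x = Sum.inr z → z ∈ Z') ∧
          (∀ y : Y, ∃ x, f x = Sum.inl y) ∧
          (∀ z ∈ Z', ∃ x, f x = Sum.inr z)) := by
  classical
  obtain ⟨F, hF, hF', hFhall⟩ := exists_hallUpTo_of_thirteen_le (L := X) (R := Y) (d := 13)
    (E := 20) (m := 3 * n / 2) le_rfl (by omega) (by omega) (by omega)
  obtain ⟨B, hB, hB', hBhall⟩ := exists_hallUpTo_of_thirteen_le (L := Y ⊕ Z) (R := X) (d := 13)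
    (E := 18) (m := (3 * n + 1) / 2) le_rfl (by rw [Fintype.card_sum]; omega)
    (by rw [Fintype.card_sum]; omega) (by rcases n.eq_zero_or_pos <;> omega)
  refine ⟨bipartiteGraph (unionNeighbors F B), fun _ _ => id, fun _ _ => id, ?_, fun Z' hZ' => ?_⟩
  · rintro (x | w)
    · rw [ncard_neighborSet_bipartiteGraph_inl]
      exact (card_unionNeighbors_le hF hB' x).trans (by norm_num)
    · rw [ncard_neighborSet_bipartiteGraph_inr]
      exact card_transposeNeighbors_unionNeighbors_le hF' hB w
  · obtain ⟨f, hf, hfN⟩ :=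
      exists_bijective_unionNeighbors hFhall hBhall (by omega) Z' (by omega)
    refine ⟨Sum.map id Subtype.val ∘ f,
      (Function.injective_id.sumMap Subtype.val_injective).comp hf.injective, hfN,
      fun x z hxz => ?_, fun y => ?_, fun z hz => ?_⟩
    · rcases hfx : f x with y | z'
      · simp [hfx] at hxz
      · obtain rfl : (z' : Z) = z := by simpa [hfx] using hxz
        exact z'.2
    · obtain ⟨x, hx⟩ := hf.surjective (.inl y)
      exact ⟨x, by simp [hx]⟩
    · obtain ⟨x, hx⟩ := hf.surjective (.inr ⟨z, hz⟩)
      exact ⟨x, by simp [hx]⟩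

/-- Lemma 3.6 (Montgomery's template): there is `n₀` such that for every `n ≥ n₀`
and `k ≤ n` there is a bipartite graph `H` with parts `X` (of size `3n`) and
`Y ∪ Z` (with `|Y| = 2n`, `|Z| = n + k`), with `Δ(H) ≤ 100`, such that for every
`Z' ⊆ Z` of size `n` there is a perfect matching in `H` between `X` and `Y ∪ Z'`.
Here `X` is encoded as `Fin (3n)`, `Y` as `Fin (2n)` and `Z` as `Fin (n+k)`. -/
theorem template_exists :
    ∃ n₀ : ℕ, ∀ n : ℕ, n₀ ≤ n → ∀ k : ℕ, k ≤ n →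
      ∃ H : SimpleGraph (Fin (3 * n) ⊕ (Fin (2 * n) ⊕ Fin (n + k))),
        -- `H` is bipartite with classes `X = Fin (3n)` and `Y ∪ Z`
        (∀ a b : Fin (3 * n), ¬ H.Adj (Sum.inl a) (Sum.inl b)) ∧
        (∀ a b : Fin (2 * n) ⊕ Fin (n + k), ¬ H.Adj (Sum.inr a) (Sum.inr b)) ∧
        -- `Δ(H) ≤ 100`
        (∀ v, (H.neighborSet v).ncard ≤ 100) ∧
        -- robust matching property
        (∀ Z' : Finset (Fin (n + k)), Z'.card = n →
          ∃ f : Fin (3 * n) → Fin (2 * n) ⊕ Fin (n + k),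
            Function.Injective f ∧
            (∀ x, H.Adj (Sum.inl x) (Sum.inr (f x))) ∧
            (∀ x z, f x = Sum.inr z → z ∈ Z') ∧
            (∀ y : Fin (2 * n), ∃ x, f x = Sum.inl y) ∧
            (∀ z ∈ Z', ∃ x, f x = Sum.inr z)) := by
  refine ⟨0, fun n _ k hk => ?_⟩
  obtain ⟨H, hX, hYZ, hdeg, hmatch⟩ := template_exists_general (X := Fin (3 * n))
    (Y := Fin (2 * n)) (Z := Fin (n + k)) (n := n) (by simp) (by simp) (by simp; omega)
  exact ⟨H, hX, hYZ, fun v => (hdeg v).trans (by norm_num), hmatch⟩
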